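/- Let G be a finite simple graph of order n with maximum degree Δ ≥ 2, and let k be the number of edges v_i v_j of G with d_i = d_j. Then ISDD(G) ≤ k/2 + (Δ·(Δ−1)/(Δ² + (Δ−1)²))·(n·Δ/2 − k). -/

import Mathlib

/-- The inverse symmetric division deg index
`ISDD(G) = Σ_{v_i v_j ∈ E(G)} d_i·d_j/(d_i² + d_j²)`. -/
noncomputable def ISDD {V : Type*} [Fintype V] [DecidableEq V] (G : SimpleGraph V)
    [DecidableRel G.Adj] : ℝ :=
  ∑ e ∈ G.edgeFinset,
    Sym2.lift ⟨fun i j => ((G.degree i : ℝ) * (G.degree j : ℝ)) /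
      ((G.degree i : ℝ) ^ 2 + (G.degree j : ℝ) ^ 2), by intro a b; ring⟩ e

lemma aux_lt (a b D : ℝ) (ha : 0 ≤ a) (hab : a + 1 ≤ b) (hb : b ≤ D) (hD : 2 ≤ D) :
    a * b / (a ^ 2 + b ^ 2) ≤ D * (D - 1) / (D ^ 2 + (D - 1) ^ 2) := by
  have hb0 : 0 < b := by linarith
  rw [div_le_div_iff₀ (by positivity) (by positivity)]
  have h1 : 0 ≤ (D - 1) * b - D * a := by nlinarith
  have h2 : 0 ≤ D * b - (D - 1) * a := by nlinarith
  nlinarith [mul_nonneg h1 h2]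

lemma aux_ne (a b D : ℕ) (hab : a ≠ b) (ha : a ≤ D) (hb : b ≤ D) (hD : 2 ≤ D) :
    (a : ℝ) * b / ((a : ℝ) ^ 2 + (b : ℝ) ^ 2) ≤
      (D : ℝ) * ((D : ℝ) - 1) / ((D : ℝ) ^ 2 + ((D : ℝ) - 1) ^ 2) := by
  have hD' : (2 : ℝ) ≤ D := by exact_mod_cast hD
  rcases lt_or_gt_of_ne hab with h | h
  · exact aux_lt a b D (by positivity) (by exact_mod_cast h) (by exact_mod_cast hb) hD'
  · rw [mul_comm (a : ℝ) b, add_comm ((a : ℝ) ^ 2)]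
    exact aux_lt b a D (by positivity) (by exact_mod_cast h) (by exact_mod_cast ha) hD'

/-- If `G` has order `n`, maximum degree `Δ ≥ 2`, and `k` edges whose
endpoints have equal degrees, then
`ISDD(G) ≤ k/2 + (Δ·(Δ−1)/(Δ²+(Δ−1)²))·(n·Δ/2 − k)`. -/
theorem stmt_12 {V : Type*} [Fintype V] [DecidableEq V] (G : SimpleGraph V)
    [DecidableRel G.Adj] (hΔ : 2 ≤ G.maxDegree) (n k : ℕ)
    (hn : n = Fintype.card V)
    (hk : k = (G.edgeFinset.filter
      (fun e => (Sym2.map (fun v => G.degree v) e).IsDiag)).card) :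
    ISDD G ≤ (k : ℝ) / 2 +
      ((G.maxDegree : ℝ) * ((G.maxDegree : ℝ) - 1)) /
        ((G.maxDegree : ℝ) ^ 2 + ((G.maxDegree : ℝ) - 1) ^ 2) *
        ((n : ℝ) * (G.maxDegree : ℝ) / 2 - (k : ℝ)) := by
  set c : ℝ := ((G.maxDegree : ℝ) * ((G.maxDegree : ℝ) - 1)) /
        ((G.maxDegree : ℝ) ^ 2 + ((G.maxDegree : ℝ) - 1) ^ 2) with hc
  have hD : (2 : ℝ) ≤ G.maxDegree := by exact_mod_cast hΔ
  have hc0 : 0 ≤ c := div_nonneg (mul_nonneg (by linarith) (by linarith)) (by positivity)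
  have hm : (G.edgeFinset.card : ℝ) ≤ (n : ℝ) * (G.maxDegree : ℝ) / 2 := by
    have h1 := G.sum_degrees_eq_twice_card_edges
    have h2 : ∑ v, G.degree v ≤ n * G.maxDegree := by
      rw [hn]
      have := Finset.sum_le_card_nsmul Finset.univ (fun v => G.degree v) G.maxDegree
        (fun v _ => G.degree_le_maxDegree v)
      simpa using this
    rw [h1] at h2
    have h3 : (2 : ℝ) * G.edgeFinset.card ≤ n * G.maxDegree := by exact_mod_cast h2
    linarith
  have key : ISDD G ≤ ∑ e ∈ G.edgeFinset,
      (c + if (Sym2.map (fun v => G.degree v) e).IsDiag then (1 / 2 - c) else 0) := by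
    unfold ISDD
    apply Finset.sum_le_sum
    intro e _
    induction e using Sym2.ind with
    | _ x y =>
      simp only [Sym2.lift_mk, Sym2.map_mk, Sym2.mk_isDiag_iff]
      split_ifs with h
      · rw [h]
        have h0 : (0 : ℝ) ≤ (G.degree y : ℝ) ^ 2 := by positivity
        have : (G.degree y : ℝ) * G.degree y / ((G.degree y : ℝ) ^ 2 + (G.degree y : ℝ) ^ 2)
            ≤ 1 / 2 := div_le_of_le_mul₀ (by positivity) (by norm_num) (by nlinarith)
        linarith
      · rw [add_zero]
        exact aux_ne _ _ _ h (G.degree_le_maxDegree x) (G.degree_le_maxDegree y) hΔ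
  rw [Finset.sum_add_distrib, ← Finset.sum_filter, Finset.sum_const, Finset.sum_const, ← hk,
    nsmul_eq_mul, nsmul_eq_mul] at key
  have := mul_le_mul_of_nonneg_left hm hc0
  linarith
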